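/- arXiv:1906.07958 — 6 statements merged into one kernel-verified Lean document; each statement's English description precedes it below -/
import Mathlib

section
/- Let n ≥ 1 and let g, M, Ω : ℝ → Matrix (Fin n) (Fin n) ℝ be such that Ω is continuous, g(t) is invertible for every t, g has derivative g'(t) = g(t) * Ω(t) at every t, and M has derivative M'(t) = M(t) * Ω(t) − Ω(t) * M(t) at every t. Then the right momentum m(t) := g(t) * M(t) * g(t)⁻¹ is constant: for all t, g(t) * M(t) * g(t)⁻¹ = g(0) * M(0) * g(0)⁻¹. -/
attribute [local instance] Matrix.linftyOpNormedAddCommGroup Matrix.linftyOpNormedRing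
  Matrix.linftyOpNormedSpace Matrix.linftyOpNormedAlgebra

/-- If `g' = gΩ` and the left momentum satisfies the Euler–Poincaré equation
`M' = [M, Ω] = MΩ − ΩM`, then the right momentum `m(t) = g(t) M(t) g(t)⁻¹` is conserved. -/
theorem right_momentum_conserved (n : ℕ) (hn : 1 ≤ n)
    (g M Ω : ℝ → Matrix (Fin n) (Fin n) ℝ)
    (hΩcont : Continuous Ω)
    (hginv : ∀ t : ℝ, IsUnit (g t))
    (hg : ∀ t : ℝ, HasDerivAt g (g t * Ω t) t)
    (hM : ∀ t : ℝ, HasDerivAt M (M t * Ω t - Ω t * M t) t) :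
    ∀ t : ℝ, g t * M t * (g t)⁻¹ = g 0 * M 0 * (g 0)⁻¹ := by
  have : CompleteSpace (Matrix (Fin n) (Fin n) ℝ) := FiniteDimensional.complete ℝ _
  have hinv : ∀ t : ℝ, HasDerivAt (fun s => (g s)⁻¹) (-((g t)⁻¹ * (g t * Ω t) * (g t)⁻¹)) t := by
    intro t
    obtain ⟨u, hu⟩ := hginv t
    have h1 := hasFDerivAt_ringInverse (𝕜 := ℝ) u
    rw [hu] at h1
    have h2 := h1.comp_hasDerivAt t (hg t)
    have h3 : ((u⁻¹ : (Matrix (Fin n) (Fin n) ℝ)ˣ) : Matrix (Fin n) (Fin n) ℝ) = (g t)⁻¹ := by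
      rw [← hu, Matrix.coe_units_inv]
    have h4 : (fun s => (g s)⁻¹) = Ring.inverse ∘ g := by
      funext s
      exact Matrix.nonsing_inv_eq_ringInverse (g s)
    rw [h4]
    have h6 : (-((ContinuousLinearMap.mulLeftRight ℝ (Matrix (Fin n) (Fin n) ℝ))
        (u⁻¹ : (Matrix (Fin n) (Fin n) ℝ)ˣ).val) (u⁻¹ : (Matrix (Fin n) (Fin n) ℝ)ˣ).val)
        (g t * Ω t) = -((g t)⁻¹ * (g t * Ω t) * (g t)⁻¹) := by
      rw [h3]
      rfl
    rw [← h6]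
    exact h2
  have hm : ∀ t : ℝ, HasDerivAt (fun s => g s * M s * (g s)⁻¹) 0 t := by
    intro t
    have h := ((hg t).mul (hM t)).mul (hinv t)
    have hd : IsUnit (g t).det := (Matrix.isUnit_iff_isUnit_det _).1 (hginv t)
    have h5 : (g t)⁻¹ * (g t * Ω t) = Ω t := by
      rw [← Matrix.mul_assoc, Matrix.nonsing_inv_mul _ hd, Matrix.one_mul]
    rw [h5] at h
    have h7 : (g t * Ω t * M t + g t * (M t * Ω t - Ω t * M t)) * (g t)⁻¹
        + (g t * M t) * -(Ω t * (g t)⁻¹) = 0 := by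
      noncomm_ring
    rw [← h7]
    exact h
  intro t
  exact is_const_of_deriv_eq_zero (fun s => (hm s).differentiableAt) (fun s => (hm s).deriv) t 0
end

section
/- Let n ≥ 1, let κ ∈ ℝ, and let M : ℝ → Matrix (Fin n) (Fin n) ℝ satisfy, at every t, the Euler equation M'(t) = κ•(M(t) * M(t)ᵀ − M(t)ᵀ * M(t)). Then both the skew part and the determinant of M are conserved: for all t ∈ ℝ, M(t) − M(t)ᵀ = M(0) − M(0)ᵀ and det(M(t)) = det(M(0)). -/
open Matrix

attribute [local instance] Matrix.linftyOpNormedAddCommGroup Matrix.linftyOpNormedRing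
  Matrix.linftyOpNormedSpace Matrix.linftyOpNormedAlgebra

theorem entry_hasDerivAt {n : ℕ} {M : ℝ → Matrix (Fin n) (Fin n) ℝ}
    {D : Matrix (Fin n) (Fin n) ℝ} {t : ℝ} (h : HasDerivAt M D t) (i j : Fin n) :
    HasDerivAt (fun s => M s i j) (D i j) t := by
  have := (LinearMap.toContinuousLinearMap
    (Matrix.entryLinearMap ℝ ℝ i j : Matrix (Fin n) (Fin n) ℝ →ₗ[ℝ] ℝ)).hasFDerivAt.comp_hasDerivAt t h
  exact this

theorem det_hasDerivAt {n : ℕ} {M : ℝ → Matrix (Fin n) (Fin n) ℝ}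
    {D : Matrix (Fin n) (Fin n) ℝ} {t : ℝ} (h : HasDerivAt M D t) :
    HasDerivAt (fun s => (M s).det) ((M t).adjugate * D).trace t := by
  have key : ((M t).adjugate * D).trace = ∑ σ : Equiv.Perm (Fin n),
      ((Equiv.Perm.sign σ : ℤ) : ℝ) *
        ∑ i, (∏ j ∈ Finset.univ.erase i, M t (σ j) j) • D (σ i) i := by
    have h1 : ((M t).adjugate * D).trace =
        ∑ i, ((M t).updateCol i (fun k => D k i)).det := by
      simp only [Matrix.trace, Matrix.diag_apply]
      refine Finset.sum_congr rfl fun i _ => ?_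
      rw [← Matrix.cramer_apply, Matrix.cramer_eq_adjugate_mulVec]
      rfl
    rw [h1]
    simp only [Matrix.det_apply', Finset.mul_sum]
    rw [Finset.sum_comm]
    refine Finset.sum_congr rfl fun σ _ => Finset.sum_congr rfl fun i _ => ?_
    congr 1
    rw [← Finset.prod_erase_mul _ _ (Finset.mem_univ i), smul_eq_mul]
    congr 1
    · refine Finset.prod_congr rfl fun j hj => ?_
      rw [Matrix.updateCol_ne (Finset.ne_of_mem_erase hj)]
    · rw [Matrix.updateCol_self]
  rw [key]
  simp only [Matrix.det_apply']
  refine HasDerivAt.fun_sum fun σ _ => HasDerivAt.const_mul _ ?_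
  exact HasDerivAt.fun_finsetProd fun i _ => entry_hasDerivAt h (σ i) i

/-- For a solution of the Euler equation `M' = κ[M, Mᵀ]`, both the skew-symmetric part
`M − Mᵀ` and the determinant of `M` are conserved. -/
theorem euler_skew_and_det_conserved (n : ℕ) (hn : 1 ≤ n) (κ : ℝ)
    (M : ℝ → Matrix (Fin n) (Fin n) ℝ)
    (hM : ∀ t : ℝ, HasDerivAt M (κ • (M t * (M t)ᵀ - (M t)ᵀ * M t)) t) :
    ∀ t : ℝ, M t - (M t)ᵀ = M 0 - (M 0)ᵀ ∧ (M t).det = (M 0).det := by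
  intro t
  constructor
  · ext i j
    have hd : ∀ s, HasDerivAt (fun s => M s i j - M s j i) 0 s := by
      intro s
      have h0 := (entry_hasDerivAt (hM s) i j).sub (entry_hasDerivAt (hM s) j i)
      have hs : (κ • (M s * (M s)ᵀ - (M s)ᵀ * M s))ᵀ =
          κ • (M s * (M s)ᵀ - (M s)ᵀ * M s) := by
        simp [Matrix.transpose_mul]
      have := congrFun (congrFun hs i) j
      rw [Matrix.transpose_apply] at this
      rw [this, sub_self] at h0
      exact h0
    exact is_const_of_deriv_eq_zero (fun s => (hd s).differentiableAt)
      (fun s => (hd s).deriv) t 0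
  · have hd : ∀ s, HasDerivAt (fun s => (M s).det) 0 s := by
      intro s
      convert det_hasDerivAt (hM s) using 1
      rw [Matrix.mul_smul, Matrix.trace_smul, Matrix.mul_sub, Matrix.trace_sub,
        ← Matrix.mul_assoc, Matrix.adjugate_mul, ← Matrix.mul_assoc,
        Matrix.trace_mul_comm _ (M s), ← Matrix.mul_assoc, Matrix.mul_adjugate, sub_self,
        smul_zero]
    exact is_const_of_deriv_eq_zero (fun s => (hd s).differentiableAt)
      (fun s => (hd s).deriv) t 0
end

section
/- Let δ > 0 and let S_δ = {X : Matrix (Fin 2) (Fin 2) ℝ | X.trace = 0 ∧ X.det = −δ}. Suppose F : Matrix (Fin 2) (Fin 2) ℝ → ℝ is continuous on S_δ and invariant under conjugation by the modular group: F(γ_ℝ * X * γ_ℝ⁻¹) = F(X) for every γ ∈ SL(2,ℤ) and every X ∈ S_δ. Then F is constant on S_δ. -/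
/-- The real matrix obtained from an element of the modular group `SL(2,ℤ)`. -/
noncomputable def modularToReal (γ : Matrix.SpecialLinearGroup (Fin 2) ℤ) :
    Matrix (Fin 2) (Fin 2) ℝ :=
  (γ : Matrix (Fin 2) (Fin 2) ℤ).map ((↑) : ℤ → ℝ)

open Filter Topology in
lemma core_const (G : ℝ → ℝ → ℝ → ℝ → ℝ)
    (hom : ∀ l m a b c d : ℝ, l ≠ 0 → m ≠ 0 → G (l * a) (l * b) (m * c) (m * d) = G a b c d)
    (inv : ∀ p q r s : ℤ, p * s - q * r = 1 → ∀ a b c d : ℝ, a * d - b * c ≠ 0 →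
      G (p * a + q * b) (r * a + s * b) (p * c + q * d) (r * c + s * d) = G a b c d)
    (cont : ∀ f g h k : ℝ → ℝ, Continuous f → Continuous g → Continuous h → Continuous k →
      ∀ t, f t * k t - g t * h t ≠ 0 → ContinuousAt (fun t => G (f t) (g t) (h t) (k t)) t) :
    ∃ C : ℝ, ∀ a b c d : ℝ, a * d - b * c ≠ 0 → G a b c d = C := by
  obtain ⟨φ, hφ, hφ1⟩ : ∃ φ : ℝ, φ ^ 2 = φ + 1 ∧ 1 < φ :=
    ⟨Real.goldenRatio, Real.goldenRatio_sq, Real.one_lt_goldenRatio⟩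
  -- the conjugate is `1 - φ`
  refine ⟨G φ 1 (1 - φ) 1, ?_⟩
  set C := G φ 1 (1 - φ) 1 with hC
  have hφ0 : φ ≠ 0 := by positivity
  have h2φ : 2 * φ - 1 ≠ 0 := by linarith
  have key : (2 - φ) * (φ + 1) = 1 := by linear_combination -hφ
  have h2 : 2 - φ ≠ 0 := fun h => by rw [h] at key; simp at key
  -- step 1
  have step1a : ∀ t : ℝ, G (φ + t * (1 - φ)) (1 + t) (1 - φ) 1 = C := by
    intro t
    set g : ℝ → ℝ := fun t => G (φ + t * (1 - φ)) (1 + t) (1 - φ) 1 with hg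
    have hgc : ContinuousAt g 0 := by
      apply cont (fun t => φ + t * (1 - φ)) (fun t => 1 + t) (fun _ => 1 - φ) (fun _ => 1)
      · fun_prop
      · fun_prop
      · fun_prop
      · fun_prop
      · intro h; apply h2φ; linear_combination h
    have hg1 : ∀ t, g ((2 - φ) ^ 2 * t) = g t := by
      intro t
      have h1 := inv 2 1 1 1 (by norm_num) (φ + t * (1 - φ)) (1 + t) (1 - φ) 1
        (by intro h; apply h2φ; linear_combination h)
      have h3 := hom (φ + 1) (2 - φ) (φ + ((2 - φ) ^ 2 * t) * (1 - φ)) (1 + (2 - φ) ^ 2 * t)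
        (1 - φ) 1 (by positivity) h2
      simp only [hg]
      rw [← h1, ← h3]
      push_cast
      have e : (φ + 1) * (2 - φ) ^ 2 = 2 - φ := by linear_combination (2 - φ) * key
      congr 1
      · linear_combination hφ + t * (1 - φ) * e + t * hφ
      · linear_combination t * e
      · linear_combination hφ
      · ring
    have hgn : ∀ n : ℕ, g (((2 - φ) ^ 2) ^ n * t) = g t := by
      intro n
      induction n with
      | zero => simp
      | succ n ih => rw [← ih, ← hg1 (((2 - φ) ^ 2) ^ n * t)]; congr 1; ring
    have hlt : (2 - φ) ^ 2 < 1 := by nlinarith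
    have hlim : Tendsto (fun n : ℕ => ((2 - φ) ^ 2) ^ n * t) atTop (𝓝 0) := by
      simpa using (tendsto_pow_atTop_nhds_zero_of_lt_one (sq_nonneg (2 - φ)) hlt).mul_const t
    have hl2 := hgc.tendsto.comp hlim
    have hl3 : Tendsto (fun _ : ℕ => g t) atTop (𝓝 (g 0)) := hl2.congr hgn
    have := tendsto_nhds_unique tendsto_const_nhds hl3
    change g t = C
    rw [this]
    simp [hg, hC]
  have step1 : ∀ a b : ℝ, a * 1 - b * (1 - φ) ≠ 0 → G a b (1 - φ) 1 = C := by
    intro a b h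
    have hα : (a * 1 - b * (1 - φ)) / (2 * φ - 1) ≠ 0 := div_ne_zero h h2φ
    have h3 := hom _ 1 (φ + ((φ * b - a) / (a * 1 - b * (1 - φ))) * (1 - φ))
      (1 + (φ * b - a) / (a * 1 - b * (1 - φ))) (1 - φ) 1 hα one_ne_zero
    rw [step1a] at h3
    rw [← h3]
    have hE := mul_div_cancel₀ (φ * b - a) h
    congr 1
    · rw [div_mul_eq_mul_div, eq_div_iff h2φ]
      linear_combination -(1 - φ) * hE
    · rw [div_mul_eq_mul_div, eq_div_iff h2φ]
      linear_combination -hE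
    · ring
    · ring
  -- step 2
  have step2 : ∀ a b : ℝ, b ≠ 0 → G a b 1 0 = C := by
    intro a b hb
    have hc : ContinuousAt (fun t => G a b 1 t) 0 := by
      apply cont (fun _ => a) (fun _ => b) (fun _ => 1) (fun t => t)
      · fun_prop
      · fun_prop
      · fun_prop
      · fun_prop
      · simpa using hb
    have hlim : Tendsto (fun n : ℕ => (((1 - φ) + n : ℝ))⁻¹) atTop (𝓝 0) :=
      tendsto_inv_atTop_zero.comp (tendsto_atTop_add_const_left _ _ tendsto_natCast_atTop_atTop)
    have hne : ∀ᶠ n : ℕ in atTop, a * (((1 - φ) + n : ℝ))⁻¹ - b * 1 ≠ 0 := by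
      have : Tendsto (fun n : ℕ => a * (((1 - φ) + n : ℝ))⁻¹ - b * 1) atTop (𝓝 (a * 0 - b * 1)) :=
        (hlim.const_mul a).sub_const _
      exact this.eventually_ne (by simpa using hb)
    have hpos : ∀ᶠ n : ℕ in atTop, 0 < (1 - φ) + (n : ℝ) :=
      (tendsto_atTop_add_const_left _ _ tendsto_natCast_atTop_atTop).eventually_gt_atTop 0
    have hev : ∀ᶠ n : ℕ in atTop, G a b 1 (((1 - φ) + n : ℝ))⁻¹ = C := by
      filter_upwards [hne, hpos] with n h1 h2
      have hdet : (a - n * b) * 1 - b * (1 - φ) ≠ 0 := by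
        intro h
        apply h1
        field_simp
        linear_combination h
      rw [← step1 (a - n * b) b hdet, ← inv 1 n 0 1 (by ring) (a - n * b) b (1 - φ) 1 hdet,
        ← hom 1 ((1 - φ) + n) a b 1 _ one_ne_zero h2.ne']
      push_cast
      congr 1
      · ring
      · ring
      · ring
      · field_simp; ring
    have hl2 := hc.tendsto.comp hlim
    have hl3 : Tendsto (fun _ : ℕ => C) atTop (𝓝 (G a b 1 0)) := hl2.congr' hev
    exact (tendsto_nhds_unique tendsto_const_nhds hl3).symm
  -- step 3
  have step3 : ∀ (r : ℚ) (a b : ℝ), a * 1 - b * r ≠ 0 → G a b r 1 = C := by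
    intro r a b h
    have hco : IsCoprime r.num (r.den : ℤ) := r.isCoprime_num_den
    obtain ⟨x, y, hxy⟩ := hco
    have hd : (r.den : ℝ) ≠ 0 := by exact_mod_cast r.den_ne_zero
    have hr : (r : ℝ) * r.den = r.num := by exact_mod_cast r.mul_den_eq_num
    have hxy' : (x : ℝ) * r.num + y * r.den = 1 := by exact_mod_cast hxy
    have hb : -(r.den : ℝ) * a + r.num * b ≠ 0 := by
      intro h'
      apply h
      apply mul_left_cancel₀ hd
      linear_combination -h' - b * hr
    rw [← step2 (x * a + y * b) (-(r.den : ℝ) * a + r.num * b) hb,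
      ← inv r.num (-y) r.den x (by linear_combination hxy) _ _ 1 0
        (by intro h'; apply hb; linear_combination -h'),
      ← hom 1 r.den a b r 1 one_ne_zero hd]
    push_cast
    congr 1
    · linear_combination (-a) * hxy'
    · linear_combination (-b) * hxy'
    · linear_combination hr
    · ring
  -- step 4
  have step4 : ∀ x a b : ℝ, a * 1 - b * x ≠ 0 → G a b x 1 = C := by
    intro x a b h
    by_contra hne
    have hc : ContinuousAt (fun t => G a b t 1) x := by
      apply cont (fun _ => a) (fun _ => b) (fun t => t) (fun _ => 1)
      · fun_prop
      · fun_prop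
      · fun_prop
      · fun_prop
      · exact h
    have e1 := hc.eventually_ne hne
    have e2 : ∀ᶠ t in 𝓝 x, a * 1 - b * t ≠ 0 :=
      (show ContinuousAt (fun t => a * 1 - b * t) x by fun_prop).eventually_ne h
    obtain ⟨U, hU, hUo, hx⟩ := eventually_nhds_iff.1 (e1.and e2)
    obtain ⟨_, ⟨r, rfl⟩, hr⟩ := Rat.denseRange_cast.exists_mem_open hUo ⟨x, hx⟩ |>.elim
      fun r hr => (⟨(r : ℝ), ⟨r, rfl⟩, hr⟩ : ∃ y : ℝ, (∃ r : ℚ, (r : ℝ) = y) ∧ y ∈ U)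
    exact (hU _ hr).1 (step3 r a b (hU _ hr).2)
  intro a b c d h
  by_cases hd : d = 0
  · subst hd
    have hb : b ≠ 0 := by rintro rfl; simp at h
    have hc : c ≠ 0 := by rintro rfl; simp at h
    have := hom 1 c a b 1 0 one_ne_zero hc
    rw [step2 a b hb] at this
    simpa using this
  · have := hom 1 d a b (c / d) 1 one_ne_zero hd
    rw [step4 (c / d) a b (by
      intro h'; apply h; field_simp at h'; linear_combination h')] at this
    rw [← this]
    congr 1
    · ring
    · ring
    · field_simp
    · ring

/-- Matrix with eigenvectors `(a,b)` for `s`, `(c,d)` for `-s`. -/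
noncomputable def eigM (s a b c d : ℝ) : Matrix (Fin 2) (Fin 2) ℝ :=
  !![s * (a * d + b * c) / (a * d - b * c), -(2 * s * a * c) / (a * d - b * c);
     2 * s * b * d / (a * d - b * c), -(s * (a * d + b * c) / (a * d - b * c))]

lemma eigM_mem (s a b c d : ℝ) (h : a * d - b * c ≠ 0) :
    (eigM s a b c d).trace = 0 ∧ (eigM s a b c d).det = -(s ^ 2) := by
  constructor
  · simp [eigM, Matrix.trace_fin_two]
  · simp only [eigM, Matrix.det_fin_two_of]
    field_simp
    ring

lemma eigM_surj (s : ℝ) (hs : 0 < s) (X : Matrix (Fin 2) (Fin 2) ℝ)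
    (h1 : X.trace = 0) (h2 : X.det = -(s ^ 2)) :
    ∃ a b c d : ℝ, a * d - b * c ≠ 0 ∧ X = eigM s a b c d := by
  rw [Matrix.trace_fin_two] at h1
  rw [Matrix.det_fin_two] at h2
  obtain ⟨u, hu⟩ : ∃ u, X 0 0 = u := ⟨_, rfl⟩
  obtain ⟨v, hv⟩ : ∃ u, X 0 1 = u := ⟨_, rfl⟩
  obtain ⟨w, hw⟩ : ∃ u, X 1 0 = u := ⟨_, rfl⟩
  have hu' : X 1 1 = -u := by linarith
  have hX : X = !![u, v; w, -u] := by
    rw [Matrix.eta_fin_two X, hu, hv, hw, hu']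
  rw [hu, hv, hw, hu'] at h2
  have hvw : v * w = s ^ 2 - u ^ 2 := by linear_combination -h2
  by_cases hus : u + s = 0
  · have hsu : s - u ≠ 0 := by intro h; linarith
    have hD : v * w - (s - u) * (u - s) = 2 * s * (s - u) := by linear_combination hvw
    refine ⟨v, s - u, u - s, w, by rw [hD]; positivity, ?_⟩
    rw [hX, eigM, hD]
    congr 1
    ext i j
    fin_cases i <;> fin_cases j <;> simp <;> field_simp <;>
      first | ring1 | linear_combination hvw | linear_combination -hvw
  · have hD : (u + s) * (-(u + s)) - w * v = -(2 * s * (u + s)) := by linear_combination -hvw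
    refine ⟨u + s, w, v, -(u + s), by rw [hD]; exact neg_ne_zero.2 (by positivity), ?_⟩
    rw [hX, eigM, hD]
    congr 1
    ext i j
    fin_cases i <;> fin_cases j <;> simp <;> field_simp <;>
      first | ring1 | linear_combination hvw | linear_combination -hvw

lemma eigM_conj (s a b c d p q r t : ℝ) (hdet : p * t - q * r = 1) (h : a * d - b * c ≠ 0) :
    !![p, q; r, t] * eigM s a b c d * (!![p, q; r, t])⁻¹ =
      eigM s (p * a + q * b) (r * a + t * b) (p * c + q * d) (r * c + t * d) := by
  have hD : (p * a + q * b) * (r * c + t * d) - (r * a + t * b) * (p * c + q * d)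
      = a * d - b * c := by linear_combination (a * d - b * c) * hdet
  have hu : IsUnit (!![p, q; r, t]).det := by rw [Matrix.det_fin_two_of, hdet]; exact isUnit_one
  have : !![p, q; r, t] * eigM s a b c d =
      eigM s (p * a + q * b) (r * a + t * b) (p * c + q * d) (r * c + t * d)
        * !![p, q; r, t] := by
    rw [eigM, eigM, hD, Matrix.mul_fin_two, Matrix.mul_fin_two]
    congr 1
    ext i j
    fin_cases i <;> fin_cases j <;> simp
    · linear_combination (-s * (a * d * p + b * c * p + 2 * b * d * q) * (a * d - b * c)⁻¹) * hdet
    · linear_combination (s * (a * d * q + b * c * q + 2 * a * c * p) * (a * d - b * c)⁻¹) * hdet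
    · linear_combination (-s * (a * d * r + b * c * r + 2 * b * d * t) * (a * d - b * c)⁻¹) * hdet
    · linear_combination (s * (a * d * t + b * c * t + 2 * a * c * r) * (a * d - b * c)⁻¹) * hdet
  rw [this, Matrix.mul_nonsing_inv_cancel_right _ _ hu]

/-- Theorem 5.1 (case `Γ = PSL(2,ℤ)`): a continuous function on the one-sheeted
hyperboloid `S_δ = {trace = 0, det = −δ}` (`δ > 0`) which is invariant under conjugation
by the modular group is constant. -/
theorem no_nonconstant_invariant_on_one_sheeted_hyperboloid (δ : ℝ) (hδ : 0 < δ)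
    (F : Matrix (Fin 2) (Fin 2) ℝ → ℝ)
    (hFcont : ContinuousOn F {X : Matrix (Fin 2) (Fin 2) ℝ | X.trace = 0 ∧ X.det = -δ})
    (hFinv : ∀ γ : Matrix.SpecialLinearGroup (Fin 2) ℤ,
      ∀ X ∈ {X : Matrix (Fin 2) (Fin 2) ℝ | X.trace = 0 ∧ X.det = -δ},
        F (modularToReal γ * X * (modularToReal γ)⁻¹) = F X) :
    ∀ X ∈ {X : Matrix (Fin 2) (Fin 2) ℝ | X.trace = 0 ∧ X.det = -δ},
      ∀ Y ∈ {X : Matrix (Fin 2) (Fin 2) ℝ | X.trace = 0 ∧ X.det = -δ},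
        F X = F Y := by
  obtain ⟨s, hs, rfl⟩ : ∃ s : ℝ, 0 < s ∧ δ = s ^ 2 :=
    ⟨√δ, Real.sqrt_pos.2 hδ, (Real.sq_sqrt hδ.le).symm⟩
  have hex : ∃ C : ℝ, ∀ a b c d : ℝ, a * d - b * c ≠ 0 → F (eigM s a b c d) = C := by
    refine core_const (fun a b c d => F (eigM s a b c d)) ?_ ?_ ?_
    · intro l m a b c d hl hm
      have : eigM s (l * a) (l * b) (m * c) (m * d) = eigM s a b c d := by
        have hD : l * a * (m * d) - l * b * (m * c) = (l * m) * (a * d - b * c) := by ring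
        have hlm : l * m ≠ 0 := mul_ne_zero hl hm
        rw [eigM, eigM, hD]
        rw [← mul_div_mul_left (s * (a * d + b * c)) _ hlm,
          ← mul_div_mul_left (-(2 * s * a * c)) _ hlm, ← mul_div_mul_left (2 * s * b * d) _ hlm]
        ring_nf
      simp only [this]
    · intro p q r t hdet a b c d h
      have h1 := hFinv ⟨!![p, q; r, t], by rw [Matrix.det_fin_two_of, hdet]⟩ (eigM s a b c d)
        (eigM_mem s a b c d h)
      have h2 : modularToReal ⟨!![p, q; r, t], by rw [Matrix.det_fin_two_of, hdet]⟩ =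
          !![(p : ℝ), q; r, t] := by
        ext i j
        fin_cases i <;> fin_cases j <;> simp [modularToReal]
      rw [h2, eigM_conj s a b c d p q r t (by exact_mod_cast hdet) h] at h1
      exact h1
    · intro f g h k hf hg hh hk t ht
      have hD : ContinuousAt (fun t => f t * k t - g t * h t) t := by fun_prop
      have hM : ContinuousAt (fun t => eigM s (f t) (g t) (h t) (k t)) t := by
        unfold eigM
        refine continuousAt_pi.2 fun i => continuousAt_pi.2 fun j => ?_
        fin_cases i <;> fin_cases j <;> simp <;> fun_prop (disch := exact ht)
      have hF := hFcont (eigM s (f t) (g t) (h t) (k t)) (eigM_mem _ _ _ _ _ ht)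
      refine Filter.Tendsto.comp hF (tendsto_nhdsWithin_iff.2 ⟨hM, ?_⟩)
      filter_upwards [hD.eventually_ne ht] with x hx
      exact eigM_mem _ _ _ _ _ hx
  obtain ⟨C, hC⟩ := hex
  have hall : ∀ X ∈ {X : Matrix (Fin 2) (Fin 2) ℝ | X.trace = 0 ∧ X.det = -(s ^ 2)},
      F X = C := by
    rintro X ⟨h1, h2⟩
    obtain ⟨a, b, c, d, h, rfl⟩ := eigM_surj s hs X h1 h2
    exact hC a b c d h
  intro X hX Y hY
  rw [hall X hX, hall Y hY]
end

section
/- For every δ > 0 there exists a real 2×2 matrix X with X.trace = 0 and X.det = −δ whose orbit under conjugation by the modular group is dense in the one-sheeted hyperboloid: the closure of {γ_ℝ * X * γ_ℝ⁻¹ | γ ∈ SL(2,ℤ)} contains the whole set S_δ = {Y : Matrix (Fin 2) (Fin 2) ℝ | Y.trace = 0 ∧ Y.det = −δ}. -/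
theorem mtr_mul (a b : Matrix.SpecialLinearGroup (Fin 2) ℤ) :
    modularToReal (a * b) = modularToReal a * modularToReal b := by
  unfold modularToReal
  rw [Matrix.SpecialLinearGroup.coe_mul]
  exact Matrix.map_mul (f := Int.castRingHom ℝ)

theorem mtr_one : modularToReal 1 = 1 := by
  unfold modularToReal
  simp

theorem mtr_mul_inv (a : Matrix.SpecialLinearGroup (Fin 2) ℤ) :
    modularToReal a * modularToReal a⁻¹ = 1 := by
  rw [← mtr_mul, mul_inv_cancel, mtr_one]

theorem mtr_inv_mul (a : Matrix.SpecialLinearGroup (Fin 2) ℤ) :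
    modularToReal a⁻¹ * modularToReal a = 1 := by
  rw [← mtr_mul, inv_mul_cancel, mtr_one]

theorem mtr_inv (a : Matrix.SpecialLinearGroup (Fin 2) ℤ) :
    (modularToReal a)⁻¹ = modularToReal a⁻¹ :=
  Matrix.inv_eq_right_inv (mtr_mul_inv a)

/-- The conjugation action. -/
noncomputable def cj (a : Matrix.SpecialLinearGroup (Fin 2) ℤ) (X : Matrix (Fin 2) (Fin 2) ℝ) :
    Matrix (Fin 2) (Fin 2) ℝ := modularToReal a * X * modularToReal a⁻¹

theorem cj_mul (a b : Matrix.SpecialLinearGroup (Fin 2) ℤ) (X : Matrix (Fin 2) (Fin 2) ℝ) :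
    cj (a * b) X = cj a (cj b X) := by
  simp only [cj, mul_inv_rev, mtr_mul, mul_assoc]

theorem cj_one (X : Matrix (Fin 2) (Fin 2) ℝ) : cj 1 X = X := by
  simp [cj, mtr_one]

theorem cj_inv_cj (a : Matrix.SpecialLinearGroup (Fin 2) ℤ) (X : Matrix (Fin 2) (Fin 2) ℝ) :
    cj a⁻¹ (cj a X) = X := by
  rw [← cj_mul, inv_mul_cancel, cj_one]

theorem cj_trace (a : Matrix.SpecialLinearGroup (Fin 2) ℤ) (X : Matrix (Fin 2) (Fin 2) ℝ) :
    (cj a X).trace = X.trace := by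
  rw [cj, Matrix.trace_mul_comm, ← mul_assoc, mtr_inv_mul, one_mul]

theorem cj_det (a : Matrix.SpecialLinearGroup (Fin 2) ℤ) (X : Matrix (Fin 2) (Fin 2) ℝ) :
    (cj a X).det = X.det := by
  rw [cj, Matrix.det_mul_comm, ← mul_assoc, mtr_inv_mul, one_mul]

theorem cj_neg (a : Matrix.SpecialLinearGroup (Fin 2) ℤ) (X : Matrix (Fin 2) (Fin 2) ℝ) :
    cj a (-X) = -cj a X := by
  simp [cj]

theorem cj_cont (a : Matrix.SpecialLinearGroup (Fin 2) ℤ) : Continuous (cj a) := by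
  unfold cj
  fun_prop

/-- The hyperboloid. -/
def HS (s : ℝ) : Set (Matrix (Fin 2) (Fin 2) ℝ) := {Y | Y.trace = 0 ∧ Y.det = -s ^ 2}

theorem cj_mem {s : ℝ} (a : Matrix.SpecialLinearGroup (Fin 2) ℤ) {X : Matrix (Fin 2) (Fin 2) ℝ}
    (hX : X ∈ HS s) : cj a X ∈ HS s :=
  ⟨(cj_trace a X).trans hX.1, (cj_det a X).trans hX.2⟩

theorem rank_one (s : ℝ) (hs : 0 < s) (X : Matrix (Fin 2) (Fin 2) ℝ) (hX : X ∈ HS s) :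
    ∃ a b l m : ℝ, l * a + m * b = 2 * s ∧ X = !![a * l - s, a * m; b * l, b * m - s] := by
  obtain ⟨h1, h2⟩ := hX
  rw [Matrix.trace_fin_two] at h1
  rw [Matrix.det_fin_two] at h2
  obtain ⟨u, hu⟩ : ∃ u, u = X 0 0 := ⟨_, rfl⟩
  obtain ⟨v, hv⟩ : ∃ u, u = X 0 1 := ⟨_, rfl⟩
  obtain ⟨w, hw⟩ : ∃ u, u = X 1 0 := ⟨_, rfl⟩
  have h3 : X 1 1 = -u := by linarith
  have hXe : X = !![u, v; w, -u] := by
    rw [Matrix.eta_fin_two X, ← hu, ← hv, ← hw, h3]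
  rw [h3, ← hu, ← hv, ← hw] at h2
  rw [hXe]
  by_cases h : u + s = 0
  · have h' : s - u ≠ 0 := by intro h'; linarith
    have hvw : v * w = (s + u) * (s - u) := by linarith
    refine ⟨v, s - u, w / (s - u), 1, ?_, ?_⟩
    · field_simp; linear_combination hvw
    · ext i j; fin_cases i <;> fin_cases j <;> simp
      · field_simp; linear_combination -hvw
      · field_simp
  · have hvw : v * w = (s + u) * (s - u) := by linarith
    refine ⟨u + s, w, 1, v / (u + s), ?_, ?_⟩
    · field_simp; linear_combination hvw
    · ext i j; fin_cases i <;> fin_cases j <;> simp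
      · field_simp
      · field_simp; linear_combination -hvw

theorem exists_sl (x y : ℚ) (h : ¬ (x = 0 ∧ y = 0)) :
    ∃ (g : Matrix.SpecialLinearGroup (Fin 2) ℤ) (c : ℝ), c ≠ 0 ∧
      (x : ℝ) = c * (g 0 0 : ℤ) ∧ (y : ℝ) = c * (g 1 0 : ℤ) := by
  have hne : ¬ (x.num * y.den = 0 ∧ y.num * x.den = 0) := by
    rintro ⟨h1, h2⟩
    apply h
    simp at h1 h2
    exact ⟨h1, h2⟩
  have hg : 0 < Int.gcd (x.num * y.den) (y.num * x.den) := by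
    rw [Int.gcd_pos_iff]; tauto
  obtain ⟨m, n, hmn, h1, h2⟩ := Int.exists_gcd_one hg
  obtain ⟨g, hg0, hg1⟩ := IsCoprime.exists_SL2_col (Int.isCoprime_iff_gcd_eq_one.mpr hmn) 0
  have hxd : (x.den : ℝ) ≠ 0 := by exact_mod_cast x.den_nz
  have hyd : (y.den : ℝ) ≠ 0 := by exact_mod_cast y.den_nz
  have hx : (x : ℝ) = x.num / x.den := by exact_mod_cast (Rat.num_div_den x).symm
  have hy : (y : ℝ) = y.num / y.den := by exact_mod_cast (Rat.num_div_den y).symm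
  have hgR : ((Int.gcd (x.num * y.den) (y.num * x.den) : ℕ) : ℝ) ≠ 0 := by exact_mod_cast hg.ne'
  have h1R : (x.num : ℝ) * y.den = m * (Int.gcd (x.num * y.den) (y.num * x.den) : ℕ) := by
    exact_mod_cast h1
  have h2R : (y.num : ℝ) * x.den = n * (Int.gcd (x.num * y.den) (y.num * x.den) : ℕ) := by
    exact_mod_cast h2
  refine ⟨g, (Int.gcd (x.num * y.den) (y.num * x.den) : ℕ) / (x.den * y.den), by positivity, ?_, ?_⟩
  · rw [hg0, hx]; field_simp; linear_combination h1R
  · rw [hg1, hy]; field_simp; linear_combination h2R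

theorem step_A (s : ℝ) (hs : 0 < s) (X : Matrix (Fin 2) (Fin 2) ℝ) (hX : X ∈ HS s)
    (U : Set (Matrix (Fin 2) (Fin 2) ℝ)) (hU : IsOpen U) (hXU : X ∈ U) :
    ∃ X' ∈ U, ∃ (g : Matrix.SpecialLinearGroup (Fin 2) ℤ) (β : ℝ),
      X' = cj g !![s, β; 0, -s] := by
  obtain ⟨a, b, l, m, hlm, hXe⟩ := rank_one s hs X hX
  let F : ℝ × ℝ → Matrix (Fin 2) (Fin 2) ℝ := fun p =>
    (2 * s / (l * p.1 + m * p.2)) • !![p.1 * l, p.1 * m; p.2 * l, p.2 * m] - s • 1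
  have hF : ContinuousAt F (a, b) := by
    have h1 : Continuous fun p : ℝ × ℝ => !![p.1 * l, p.1 * m; p.2 * l, p.2 * m] := by
      refine continuous_matrix ?_
      intro i j
      fin_cases i <;> fin_cases j <;> simp <;> fun_prop
    have h2 : ContinuousAt (fun p : ℝ × ℝ => 2 * s / (l * p.1 + m * p.2)) (a, b) := by
      refine ContinuousAt.div (by fun_prop) (by fun_prop) ?_
      simp only; rw [hlm]; positivity
    exact (h2.smul h1.continuousAt).sub continuousAt_const
  have hFa : F (a, b) = X := by
    simp only [F]
    rw [hlm, hXe, div_self (by positivity), one_smul]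
    ext i j; fin_cases i <;> fin_cases j <;> simp
  have e1 : ∀ᶠ p in nhds (a, b), F p ∈ U := hF (by rw [hFa]; exact hU.mem_nhds hXU)
  have e2 : ∀ᶠ p : ℝ × ℝ in nhds (a, b), l * p.1 + m * p.2 ≠ 0 := by
    have : ContinuousAt (fun p : ℝ × ℝ => l * p.1 + m * p.2) (a, b) := by fun_prop
    apply this.eventually_ne
    simp only; rw [hlm]; positivity
  have hd : DenseRange (Prod.map ((↑) : ℚ → ℝ) ((↑) : ℚ → ℝ)) :=
    Rat.denseRange_cast.prodMap Rat.denseRange_cast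
  obtain ⟨p, hp, ⟨⟨x, y⟩, rfl⟩⟩ := mem_closure_iff_nhds.mp (hd (a, b)) _ (e1.and e2)
  obtain ⟨hpU, hp0⟩ := hp
  simp only [Prod.map] at hp0
  obtain ⟨g, c, hc, hx, hy⟩ := exists_sl x y (by
    rintro ⟨rfl, rfl⟩; apply hp0; simp)
  refine ⟨_, hpU, g, 2 * s * (l * (g 0 1 : ℤ) + m * (g 1 1 : ℤ)) /
    (l * (g 0 0 : ℤ) + m * (g 1 0 : ℤ)), ?_⟩
  have hdet : ((g 0 0 : ℤ) : ℝ) * (g 1 1 : ℤ) - (g 0 1 : ℤ) * (g 1 0 : ℤ) = 1 := by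
    have := g.det_coe
    rw [Matrix.det_fin_two] at this
    exact_mod_cast this
  simp only [F, Prod.map, cj]
  rw [hx, hy] at hp0 ⊢
  have hp1 : l * (g 0 0 : ℤ) + m * (g 1 0 : ℤ) ≠ 0 := by
    intro h0; apply hp0; linear_combination c * h0
  have hp2 : l * (c * (g 0 0 : ℤ)) + m * (c * (g 1 0 : ℤ)) = 
    c * (l * (g 0 0 : ℤ) + m * (g 1 0 : ℤ)) := by ring
  rw [hp2]
  have hg : modularToReal g = !![((g 0 0 : ℤ) : ℝ), (g 0 1 : ℤ); (g 1 0 : ℤ), (g 1 1 : ℤ)] := by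
    ext i j; fin_cases i <;> fin_cases j <;> simp [modularToReal]
  have hgi : modularToReal g⁻¹ =
      !![((g 1 1 : ℤ) : ℝ), -(g 0 1 : ℤ); -(g 1 0 : ℤ), (g 0 0 : ℤ)] := by
    rw [modularToReal, Matrix.SpecialLinearGroup.coe_inv, Matrix.adjugate_fin_two]
    ext i j; fin_cases i <;> fin_cases j <;> simp
  rw [hg, hgi]
  generalize ((g 0 0 : ℤ) : ℝ) = A at *
  generalize ((g 0 1 : ℤ) : ℝ) = B at *
  generalize ((g 1 0 : ℤ) : ℝ) = C at *
  generalize ((g 1 1 : ℤ) : ℝ) = D at *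
  obtain ⟨k, hk⟩ : ∃ k, k = 2 * s / (l * A + m * C) := ⟨_, rfl⟩
  have hk1 : 2 * s / (c * (l * A + m * C)) = k / c := by rw [hk]; field_simp
  have hk2 : 2 * s * (l * B + m * D) / (l * A + m * C) = k * (l * B + m * D) := by
    rw [hk]; field_simp
  have hks : s = k * (l * A + m * C) / 2 := by rw [hk]; field_simp
  have hkt : ∀ t : ℝ, k / c * (c * t) = k * t := by
    intro t; field_simp
  rw [hk1, hk2]
  ext i j; fin_cases i <;> fin_cases j <;> simp [mul_assoc, hkt]
  · rw [hks]; linear_combination -(k / 2) * (l * A - m * C) * hdet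
  · rw [hks]; linear_combination -k * A * m * hdet
  · rw [hks]; linear_combination -k * C * l * hdet
  · rw [hks]; linear_combination (k / 2) * (l * A - m * C) * hdet

/-- Integral translation. -/
def TT (n : ℤ) : Matrix.SpecialLinearGroup (Fin 2) ℤ := ⟨!![1, n; 0, 1], by simp⟩

theorem cj_TT (n : ℤ) (u v w : ℝ) : cj (TT n) !![u, v; w, -u] =
    !![u + n * w, v - 2 * n * u - n ^ 2 * w; w, -(u + n * w)] := by
  have hg : modularToReal (TT n) = !![1, (n : ℝ); 0, 1] := by
    ext i j; fin_cases i <;> fin_cases j <;> simp [modularToReal, TT]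
  have hgi : modularToReal (TT n)⁻¹ = !![1, -(n : ℝ); 0, 1] := by
    rw [modularToReal, Matrix.SpecialLinearGroup.coe_inv, Matrix.adjugate_fin_two]
    ext i j; fin_cases i <;> fin_cases j <;> simp [TT]
  rw [cj, hg, hgi]
  ext i j; fin_cases i <;> fin_cases j <;> simp <;> ring

open Filter Topology in
theorem transitive (s : ℝ) (hs : 0 < s) (X Y : Matrix (Fin 2) (Fin 2) ℝ) (hX : X ∈ HS s)
    (hY : Y ∈ HS s) (U V : Set (Matrix (Fin 2) (Fin 2) ℝ)) (hU : IsOpen U) (hXU : X ∈ U)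
    (hV : IsOpen V) (hYV : Y ∈ V) :
    ∃ Z ∈ HS s, Z ∈ U ∧ ∃ g, cj g Z ∈ V := by
  obtain ⟨X', hX', g, β, rfl⟩ := step_A s hs X hX U hU hXU
  obtain ⟨Y', hY', h, β', rfl⟩ := step_A s hs (-Y)
    ⟨by rw [Matrix.trace_neg, hY.1, neg_zero], by rw [Matrix.det_neg, hY.2]; simp⟩
    (-V) hV.neg (by simpa using hYV)
  rw [Set.mem_neg, ← cj_neg] at hY'
  let u : ℕ → ℝ := fun n => β * (n : ℝ)⁻¹ + √(s ^ 2 + β * (-β') * ((n : ℝ)⁻¹) ^ 2)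
  let w : ℕ → ℝ := fun n => (β + β') * ((n : ℝ)⁻¹) ^ 2 - 2 * u n * (n : ℝ)⁻¹
  have hi : Tendsto (fun n : ℕ => (n : ℝ)⁻¹) atTop (𝓝 0) := tendsto_inv_atTop_nhds_zero_nat
  have hq : Tendsto (fun n : ℕ => s ^ 2 + β * (-β') * ((n : ℝ)⁻¹) ^ 2) atTop (𝓝 (s ^ 2)) := by
    simpa using (tendsto_const_nhds (x := s ^ 2)).add
      ((hi.pow 2).const_mul (β * (-β')))
  have hu : Tendsto u atTop (𝓝 s) := by
    have := (hi.const_mul β).add ((Real.continuous_sqrt.tendsto _).comp hq)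
    rw [Real.sqrt_sq hs.le] at this
    simpa [u, Function.comp_def] using this
  have hw : Tendsto w atTop (𝓝 0) := by
    have := ((hi.pow 2).const_mul (β + β')).sub ((hu.const_mul 2).mul hi)
    simpa [w] using this
  have hu' : Tendsto (fun n => -u n + (β + β') * (n : ℝ)⁻¹) atTop (𝓝 (-s)) := by
    simpa using hu.neg.add (hi.const_mul (β + β'))
  have hmat : ∀ {p q r : ℕ → ℝ} {p0 q0 r0 : ℝ}, Tendsto p atTop (𝓝 p0) → Tendsto q atTop (𝓝 q0) →
      Tendsto r atTop (𝓝 r0) → Tendsto (fun n => !![p n, q n; r n, -p n]) atTop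
        (𝓝 !![p0, q0; r0, -p0]) := by
    intro p q r p0 q0 r0 hp hq hr
    refine tendsto_pi_nhds.mpr fun i => tendsto_pi_nhds.mpr fun j => ?_
    fin_cases i <;> fin_cases j
    · exact hp
    · exact hq
    · exact hr
    · exact hp.neg
  have hZ := hmat hu (tendsto_const_nhds (x := β)) hw
  have hW := hmat hu' (tendsto_const_nhds (x := -β')) hw
  have eZ := ((cj_cont g).tendsto _).comp hZ |>.eventually (hU.mem_nhds hX')
  have hYe : -!![s, β'; 0, -s] = !![-s, -β'; 0, - -s] := by
    ext i j; fin_cases i <;> fin_cases j <;> simp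
  rw [hYe] at hY'
  have eW := ((cj_cont h).tendsto _).comp hW |>.eventually (hV.mem_nhds hY')
  have ep := hq.eventually (lt_mem_nhds (show (0 : ℝ) < s ^ 2 by positivity))
  obtain ⟨n, ⟨⟨h1, h2⟩, h3⟩, h4⟩ := (((eZ.and eW).and ep).and (eventually_gt_atTop 0)).exists
  have hn : (n : ℝ) ≠ 0 := by exact_mod_cast h4.ne'
  refine ⟨_, ?_, h1, h * TT n * g⁻¹, ?_⟩
  · refine ⟨?_, ?_⟩
    · rw [Function.comp, cj_trace]; simp [Matrix.trace_fin_two]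
    · rw [Function.comp, cj_det, Matrix.det_fin_two]
      have hsq := Real.sq_sqrt h3.le
      have hur : u n - β * (n : ℝ)⁻¹ = √(s ^ 2 + β * (-β') * ((n : ℝ)⁻¹) ^ 2) := by simp [u]
      rw [← hur] at hsq
      simp [w]
      linear_combination -hsq
  · rw [cj_mul, Function.comp, cj_inv_cj, cj_mul, cj_TT]
    rw [Int.cast_natCast]
    have a1 : u n + n * w n = -u n + (β + β') * (n : ℝ)⁻¹ := by
      simp only [w]; field_simp; ring
    have a2 : β - 2 * n * u n - n ^ 2 * w n = -β' := by
      simp only [w]; field_simp; ring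
    rw [a1, a2]
    exact h2

open TopologicalSpace in
theorem main_aux (s : ℝ) (hs : 0 < s) : ∃ X ∈ HS s, ∀ Y ∈ HS s,
    Y ∈ closure {Y | ∃ g, Y = cj g X} := by
  have hcl : IsClosed (HS s) :=
    (isClosed_eq (by fun_prop) continuous_const).inter (isClosed_eq (by fun_prop) continuous_const)
  have : PolishSpace (Matrix (Fin 2) (Fin 2) ℝ) :=
    inferInstanceAs (PolishSpace (Fin 2 → Fin 2 → ℝ))
  have : PolishSpace (HS s) := hcl.polishSpace
  have : Nonempty (HS s) := ⟨!![s, 0; 0, -s], by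
    constructor
    · simp [Matrix.trace_fin_two]
    · simp [Matrix.det_fin_two]; ring⟩
  let G : countableBasis (HS s) → Set (HS s) := fun V =>
    {X | ∃ g, ∃ Z ∈ V.1, (Z : Matrix (Fin 2) (Fin 2) ℝ) = cj g X}
  have : Countable (countableBasis (HS s)) := (countable_countableBasis _).to_subtype
  have hG : Dense (⋂ V, G V) := by
    apply dense_iInter_of_isOpen
    · intro V
      obtain ⟨W, hW, hWV⟩ := isOpen_induced_iff.mp (isOpen_of_mem_countableBasis V.2)
      have : G V = ⋃ g, (fun X : HS s => cj g X) ⁻¹' W := by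
        ext X
        simp only [G, Set.mem_iUnion, Set.mem_preimage, Set.mem_ofPred_eq]
        refine exists_congr fun g => ⟨?_, ?_⟩
        · rintro ⟨Z, hZ, hZe⟩
          rw [← hZe]; rw [← hWV] at hZ; exact hZ
        · intro hX
          refine ⟨⟨cj g X, cj_mem g X.2⟩, ?_, rfl⟩
          rw [← hWV]; exact hX
      rw [this]
      exact isOpen_iUnion fun g => hW.preimage ((cj_cont g).comp continuous_subtype_val)
    · intro V
      obtain ⟨W, hW, hWV⟩ := isOpen_induced_iff.mp (isOpen_of_mem_countableBasis V.2)
      obtain ⟨Y, hY⟩ := nonempty_of_mem_countableBasis V.2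
      rw [dense_iff_inter_open]
      rintro U0 hU0 ⟨X, hX⟩
      obtain ⟨U, hU, rfl⟩ := isOpen_induced_iff.mp hU0
      obtain ⟨Z, hZ, hZU, g, hg⟩ := transitive s hs X Y X.2 Y.2 U W hU hX hW
        (by rw [← hWV] at hY; exact hY)
      refine ⟨⟨Z, hZ⟩, hZU, g,
        ⟨cj g Z, cj_mem g hZ⟩, ?_, rfl⟩
      rw [← hWV]; exact hg
  obtain ⟨X, hX⟩ := hG.nonempty
  refine ⟨X, X.2, fun Y hY => ?_⟩
  rw [mem_closure_iff]
  intro O hO hYO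
  obtain ⟨V, hV, hYV, hVO⟩ := (isBasis_countableBasis (HS s)).exists_subset_of_mem_open
    (show (⟨Y, hY⟩ : HS s) ∈ Subtype.val ⁻¹' O from hYO) (hO.preimage continuous_subtype_val)
  obtain ⟨g, Z, hZ, hZe⟩ := Set.mem_iInter.mp hX ⟨V, hV⟩
  exact ⟨Z, hVO hZ, g, hZe⟩

/-- On every one-sheeted hyperboloid `S_δ = {trace = 0, det = −δ}` (`δ > 0`) there is a
point whose orbit under conjugation by the modular group is dense in `S_δ`. -/
theorem exists_dense_modular_orbit_on_one_sheeted_hyperboloid (δ : ℝ) (hδ : 0 < δ) :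
    ∃ X : Matrix (Fin 2) (Fin 2) ℝ, X.trace = 0 ∧ X.det = -δ ∧
      {Y : Matrix (Fin 2) (Fin 2) ℝ | Y.trace = 0 ∧ Y.det = -δ} ⊆
        closure {Y : Matrix (Fin 2) (Fin 2) ℝ |
          ∃ γ : Matrix.SpecialLinearGroup (Fin 2) ℤ,
            Y = modularToReal γ * X * (modularToReal γ)⁻¹} := by
  obtain ⟨X, hX, h⟩ := main_aux (√δ) (Real.sqrt_pos.mpr hδ)
  simp only [HS, Real.sq_sqrt hδ.le, Set.mem_ofPred_eq] at hX h
  refine ⟨X, hX.1, hX.2, fun Y hY => ?_⟩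
  simp only [mtr_inv]
  exact h Y hY
end

section
/- There exists a function F : Matrix (Fin 2) (Fin 2) ℝ → ℝ such that: (i) F is real-analytic on the open set O = {X | (X.trace)² < 4·X.det ∧ X 0 1 > 0}; (ii) F is invariant under conjugation by the modular group on O: F(γ_ℝ * X * γ_ℝ⁻¹) = F(X) for every γ ∈ SL(2,ℤ) and every X ∈ O; and (iii) F is not constant on the sheet {X ∈ O | X.trace = 0 ∧ X.det = 1} of the two-sheeted hyperboloid. -/
attribute [local instance] Matrix.linftyOpNormedAddCommGroup Matrix.linftyOpNormedRing
  Matrix.linftyOpNormedSpace Matrix.linftyOpNormedAlgebra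

open UpperHalfPlane in
/-- The invariant Petersson function `|Δ(z)|² (Im z)^12`, as a function on `ℂ`. -/
noncomputable def petDelta (z : ℂ) : ℝ :=
  ((ModularForm.eta z).re ^ 2 + (ModularForm.eta z).im ^ 2) ^ 24 * z.im ^ 12

open UpperHalfPlane in
lemma petDelta_eq (τ : ℍ) :
    ((petDelta τ : ℝ) : ℂ) =
      petersson 12 CuspForm.discriminant CuspForm.discriminant τ := by
  have h : ((ModularForm.eta τ).re ^ 2 + (ModularForm.eta τ).im ^ 2 : ℝ)
      = Complex.normSq (ModularForm.eta τ) := by rw [Complex.normSq_apply]; ring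
  rw [petDelta, h, petersson, CuspForm.coe_discriminant, ModularForm.discriminant, map_pow]
  push_cast
  rw [Complex.normSq_eq_conj_mul_self, mul_pow]
  norm_cast

open UpperHalfPlane ModularForm in
lemma petDelta_smul (γ : Matrix.SpecialLinearGroup (Fin 2) ℤ) (τ : ℍ) :
    petDelta ((γ • τ : ℍ) : ℂ) = petDelta τ := by
  have h := petersson_slash_SL 12 CuspForm.discriminant CuspForm.discriminant γ τ
  have h2 : ModularForm.discriminant ∣[(12:ℤ)] γ = ModularForm.discriminant :=
    SlashInvariantForm.slash_action_generators_SL2Z ModularForm.discriminant_S_invariant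
      ModularForm.discriminant_T_invariant γ
  rw [CuspForm.coe_discriminant, h2, ← CuspForm.coe_discriminant, ← petDelta_eq,
    ← petDelta_eq] at h
  exact_mod_cast h.symm

open UpperHalfPlane in
lemma petDelta_pos (τ : ℍ) : 0 < petDelta τ := by
  have h : ((ModularForm.eta τ).re ^ 2 + (ModularForm.eta τ).im ^ 2 : ℝ)
      = Complex.normSq (ModularForm.eta τ) := by rw [Complex.normSq_apply]; ring
  rw [petDelta, h]
  have h1 := Complex.normSq_pos.2 (ModularForm.eta_ne_zero τ.2)
  have h2 : 0 < (τ : ℂ).im := τ.2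
  positivity

open UpperHalfPlane Filter Topology MatrixGroups in
lemma petDelta_tendsto : Tendsto (fun τ : ℍ => petDelta τ) atImInfty (𝓝 0) := by
  have h : IsZeroAtImInfty (petersson 12 CuspForm.discriminant CuspForm.discriminant) :=
    IsZeroAtImInfty.petersson_isZeroAtImInfty_left 12 𝒮ℒ
      (f := CuspForm.discriminant) ModularForm.discriminant_isZeroAtImInfty
      CuspForm.discriminant
  have h' : Tendsto (petersson 12 CuspForm.discriminant CuspForm.discriminant)
    atImInfty (𝓝 0) := h
  have h2 := (Complex.continuous_re.tendsto 0).comp h'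
  refine h2.congr fun τ => ?_
  rw [Function.comp_apply, ← petDelta_eq, Complex.ofReal_re]

lemma petDelta_analyticAt {z : ℂ} (hz : 0 < z.im) : AnalyticAt ℝ petDelta z := by
  have hη : AnalyticAt ℂ ModularForm.eta z := by
    refine DifferentiableOn.analyticAt (s := UpperHalfPlane.upperHalfPlaneSet)
      (fun w hw => (ModularForm.differentiableAt_eta_of_mem_upperHalfPlaneSet
        hw).differentiableWithinAt) ?_
    exact UpperHalfPlane.isOpen_upperHalfPlaneSet.mem_nhds hz
  have hη' : AnalyticAt ℝ ModularForm.eta z := hη.restrictScalars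
  have h1 : AnalyticAt ℝ (fun w => (ModularForm.eta w).re) z :=
    (Complex.reCLM.analyticAt _).comp hη'
  have h2 : AnalyticAt ℝ (fun w => (ModularForm.eta w).im) z :=
    (Complex.imCLM.analyticAt _).comp hη'
  have h3 : AnalyticAt ℝ (fun w : ℂ => w.im) z := Complex.imCLM.analyticAt _
  exact (((h1.pow 2).add (h2.pow 2)).pow 24).mul (h3.pow 12)

/-- Twice the negative lower left entry, etc.: the fixed point in the upper half plane. -/
noncomputable def fixPt (X : Matrix (Fin 2) (Fin 2) ℝ) : ℂ :=
  (((X 0 0 - X 1 1) / (2 * X 1 0) : ℝ) : ℂ)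
    + ((√(4 * X.det - X.trace ^ 2) / (-(2 * X 1 0)) : ℝ) : ℂ) * Complex.I

lemma lower_neg {X : Matrix (Fin 2) (Fin 2) ℝ} (h : X.trace ^ 2 < 4 * X.det) (h0 : X 0 1 > 0) :
    X 1 0 < 0 := by
  rw [Matrix.trace_fin_two, Matrix.det_fin_two] at h
  by_contra hc
  push Not at hc
  nlinarith [mul_nonneg hc h0.le, sq_nonneg (X 0 0 - X 1 1)]

lemma fixPt_im (X : Matrix (Fin 2) (Fin 2) ℝ) :
    (fixPt X).im = √(4 * X.det - X.trace ^ 2) / (-(2 * X 1 0)) := by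
  rw [fixPt, Complex.add_im, Complex.ofReal_im, Complex.im_ofReal_mul, Complex.I_im]
  ring

lemma fixPt_im_pos {X : Matrix (Fin 2) (Fin 2) ℝ} (h : X.trace ^ 2 < 4 * X.det)
    (h0 : X 0 1 > 0) : 0 < (fixPt X).im := by
  rw [fixPt_im]
  have := lower_neg h h0
  exact div_pos (Real.sqrt_pos.2 (by linarith)) (by linarith)

lemma entry_analyticAt (i j : Fin 2) (X : Matrix (Fin 2) (Fin 2) ℝ) :
    AnalyticAt ℝ (fun X : Matrix (Fin 2) (Fin 2) ℝ => X i j) X := by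
  let L : Matrix (Fin 2) (Fin 2) ℝ →ₗ[ℝ] ℝ := Matrix.entryLinearMap ℝ ℝ i j
  exact (LinearMap.toContinuousLinearMap L).analyticAt X

lemma fixPt_analyticAt {X : Matrix (Fin 2) (Fin 2) ℝ} (h : X.trace ^ 2 < 4 * X.det)
    (h0 : X 0 1 > 0) : AnalyticAt ℝ fixPt X := by
  have hc := lower_neg h h0
  have e := fun i j => entry_analyticAt i j X
  have hd : AnalyticAt ℝ (fun X : Matrix (Fin 2) (Fin 2) ℝ => 4 * X.det - X.trace ^ 2) X := by
    simp only [Matrix.det_fin_two, Matrix.trace_fin_two]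
    exact (analyticAt_const.mul (((e 0 0).mul (e 1 1)).sub ((e 0 1).mul (e 1 0)))).sub
      (((e 0 0).add (e 1 1)).pow 2)
  have hs : AnalyticAt ℝ (fun X : Matrix (Fin 2) (Fin 2) ℝ => √(4 * X.det - X.trace ^ 2)) X :=
    AnalyticAt.fun_comp (g := fun x : ℝ => √x)
      ((Real.contDiffAt_sqrt (n := ⊤) (by linarith)).analyticAt) hd
  have h2 : AnalyticAt ℝ (fun X : Matrix (Fin 2) (Fin 2) ℝ => 2 * X 1 0) X :=
    analyticAt_const.mul (e 1 0)
  have a1 := ((e 0 0).sub (e 1 1)).div h2 (by linarith)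
  have a2 := hs.div h2.neg (by simp only [Pi.neg_apply]; linarith)
  have b1 := AnalyticAt.fun_comp (Complex.ofRealCLM.analyticAt _) a1
  have b2 := AnalyticAt.fun_comp (Complex.ofRealCLM.analyticAt _) a2
  exact b1.add (b2.mul analyticAt_const)

lemma modularToReal_inv (γ : Matrix.SpecialLinearGroup (Fin 2) ℤ) :
    (modularToReal γ)⁻¹ = !![(γ 1 1 : ℝ), -(γ 0 1 : ℝ); -(γ 1 0 : ℝ), (γ 0 0 : ℝ)] := by
  have hd : (γ 0 0 : ℝ) * γ 1 1 - γ 0 1 * γ 1 0 = 1 := by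
    have := γ.det_coe
    rw [Matrix.det_fin_two] at this
    exact_mod_cast this
  apply Matrix.inv_eq_right_inv
  ext i j
  fin_cases i <;> fin_cases j <;>
    simp [modularToReal, Matrix.mul_apply, Fin.sum_univ_two] <;> linarith

lemma fix_alg (a b c d p q r t s u v w : ℂ) (hc : c ≠ 0) (hw : w ≠ 0)
    (hwe : w = c * t ^ 2 + (a - d) * r * t - b * r ^ 2)
    (hu : u = (p * a + q * c) * t - (p * b + q * d) * r)
    (hv : v = -(r * a + t * c) * q + (r * b + t * d) * p)
    (hs : s ^ 2 = 4 * (a * d - b * c) - (a + d) ^ 2) (hd : p * t - q * r = 1) :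
    ((u - v) / (2 * w) + s / (-(2 * w)) * Complex.I) *
      (r * ((a - d) / (2 * c) + s / (-(2 * c)) * Complex.I) + t) =
    p * ((a - d) / (2 * c) + s / (-(2 * c)) * Complex.I) + q := by
  have hI := Complex.I_sq
  have e1 : (u - v) / (2 * w) + s / (-(2 * w)) * Complex.I = (u - v - s * Complex.I) / (2 * w) := by
    field_simp
    ring
  have e2 : (a - d) / (2 * c) + s / (-(2 * c)) * Complex.I = (a - d - s * Complex.I) / (2 * c) := by
    field_simp
    ring
  rw [e1, e2]
  field_simp
  generalize Complex.I = i at *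
  have hsi : (s * i) ^ 2 = (a + d) ^ 2 - 4 * (a * d - b * c) := by
    rw [mul_pow, hs, hI]; ring
  have hp : (p * t - q * r - 1) * (s * i) = 0 := by rw [hd]; ring
  subst hwe hu hv
  linear_combination r * hsi + (s * i * ((a - d) * r + 2 * c * t) - r * (a - d) ^ 2 - 4 * r * b * c) * hd

lemma fixPt_conj (γ : Matrix.SpecialLinearGroup (Fin 2) ℤ) {X : Matrix (Fin 2) (Fin 2) ℝ}
    (h : X.trace ^ 2 < 4 * X.det) (h0 : X 0 1 > 0) :
    fixPt (modularToReal γ * X * (modularToReal γ)⁻¹) =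
      ((γ • (⟨fixPt X, fixPt_im_pos h h0⟩ : UpperHalfPlane) : UpperHalfPlane) : ℂ) := by
  have hc := lower_neg h h0
  have hz := fixPt_im_pos h h0
  have hd : (γ 0 0 : ℝ) * γ 1 1 - γ 0 1 * γ 1 0 = 1 := by
    have := γ.det_coe
    rw [Matrix.det_fin_two] at this
    exact_mod_cast this
  have hden : ((γ 1 0 : ℝ) : ℂ) * fixPt X + (γ 1 1 : ℝ) ≠ 0 := by
    have := UpperHalfPlane.denom_ne_zero (γ : GL (Fin 2) ℝ) ⟨fixPt X, hz⟩
    simpa [UpperHalfPlane.denom] using this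
  have hdet : (modularToReal γ * X * (modularToReal γ)⁻¹).det = X.det := by
    rw [modularToReal_inv]
    simp [modularToReal, Matrix.det_fin_two, Matrix.mul_apply, Fin.sum_univ_two]
    linear_combination (X 0 0 * X 1 1 - X 0 1 * X 1 0) *
      ((γ 0 0 : ℝ) * γ 1 1 - γ 0 1 * γ 1 0 + 1) * hd
  have htr : (modularToReal γ * X * (modularToReal γ)⁻¹).trace = X.trace := by
    rw [modularToReal_inv]
    simp [modularToReal, Matrix.trace_fin_two, Matrix.mul_apply, Fin.sum_univ_two]
    linear_combination (X 0 0 + X 1 1) * hd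
  rw [UpperHalfPlane.coe_specialLinearGroup_apply]
  simp only [algebraMap_int_eq, eq_intCast]
  have hden' : ((γ 1 0 : ℝ) : ℂ) * fixPt X + ((γ 1 1 : ℝ) : ℂ) ≠ 0 := hden
  rw [eq_div_iff hden']
  rw [fixPt, fixPt, hdet, htr]
  have hs := Real.sq_sqrt (show 0 ≤ 4 * X.det - X.trace ^ 2 by linarith)
  have hspos := Real.sqrt_pos.2 (show 0 < 4 * X.det - X.trace ^ 2 by linarith)
  generalize √(4 * X.det - X.trace ^ 2) = s at hs hspos ⊢
  rw [modularToReal_inv]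
  rw [Matrix.trace_fin_two, Matrix.det_fin_two] at hs
  have hw : X 1 0 * (γ 1 1 : ℝ) ^ 2 + (X 0 0 - X 1 1) * γ 1 0 * γ 1 1 - X 0 1 * (γ 1 0 : ℝ) ^ 2
      ≠ 0 := by
    intro hw
    have h1 : (2 * X 1 0 * (γ 1 1 : ℝ) + (X 0 0 - X 1 1) * γ 1 0) ^ 2
        + s ^ 2 * (γ 1 0 : ℝ) ^ 2 = 0 := by
      rw [hs]
      linear_combination 4 * X 1 0 * hw
    have h2 : s ^ 2 * (γ 1 0 : ℝ) ^ 2 = 0 := by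
      nlinarith [sq_nonneg (2 * X 1 0 * (γ 1 1 : ℝ) + (X 0 0 - X 1 1) * γ 1 0),
        mul_nonneg (sq_nonneg s) (sq_nonneg (γ 1 0 : ℝ))]
    have hr : (γ 1 0 : ℝ) = 0 := by
      rcases mul_eq_zero.1 h2 with h3 | h3
      · exact absurd h3 (by positivity)
      · exact pow_eq_zero_iff (two_ne_zero) |>.1 h3
    rw [hr] at hw hd
    have ht : (γ 1 1 : ℝ) ≠ 0 := by
      intro ht
      rw [ht] at hd
      norm_num at hd
    have : X 1 0 * (γ 1 1 : ℝ) ^ 2 = 0 := by linarith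
    rcases mul_eq_zero.1 this with h3 | h3
    · exact hc.ne h3
    · exact ht (pow_eq_zero_iff (two_ne_zero) |>.1 h3)
  have key := fix_alg (X 0 0 : ℝ) (X 0 1 : ℝ) (X 1 0 : ℝ) (X 1 1 : ℝ) (γ 0 0 : ℝ) (γ 0 1 : ℝ)
    (γ 1 0 : ℝ) (γ 1 1 : ℝ) s _ _ _ (by exact_mod_cast hc.ne) (by exact_mod_cast hw) rfl rfl rfl
    (by exact_mod_cast hs) (by exact_mod_cast hd)
  have m00 : (modularToReal γ * X * !![(γ 1 1 : ℝ), -(γ 0 1 : ℝ); -(γ 1 0 : ℝ), (γ 0 0 : ℝ)]) 0 0 =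
      (γ 0 0 * X 0 0 + γ 0 1 * X 1 0) * γ 1 1 - (γ 0 0 * X 0 1 + γ 0 1 * X 1 1) * γ 1 0 := by
    simp [modularToReal, Matrix.mul_apply, Fin.sum_univ_two]
    ring
  have m11 : (modularToReal γ * X * !![(γ 1 1 : ℝ), -(γ 0 1 : ℝ); -(γ 1 0 : ℝ), (γ 0 0 : ℝ)]) 1 1 =
      -(γ 1 0 * X 0 0 + γ 1 1 * X 1 0) * γ 0 1 + (γ 1 0 * X 0 1 + γ 1 1 * X 1 1) * γ 0 0 := by
    simp [modularToReal, Matrix.mul_apply, Fin.sum_univ_two]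
    ring
  have m10 : (modularToReal γ * X * !![(γ 1 1 : ℝ), -(γ 0 1 : ℝ); -(γ 1 0 : ℝ), (γ 0 0 : ℝ)]) 1 0 =
      X 1 0 * (γ 1 1 : ℝ) ^ 2 + (X 0 0 - X 1 1) * γ 1 0 * γ 1 1 - X 0 1 * (γ 1 0 : ℝ) ^ 2 := by
    simp [modularToReal, Matrix.mul_apply, Fin.sum_univ_two]
    ring
  rw [m00, m11, m10]
  push_cast at key ⊢
  exact key

theorem exists_nonconstant_analytic_modular_invariant :
    ∃ F : Matrix (Fin 2) (Fin 2) ℝ → ℝ,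
      AnalyticOnNhd ℝ F
        {X : Matrix (Fin 2) (Fin 2) ℝ | (X.trace) ^ 2 < 4 * X.det ∧ X 0 1 > 0} ∧
      (∀ γ : Matrix.SpecialLinearGroup (Fin 2) ℤ,
        ∀ X ∈ {X : Matrix (Fin 2) (Fin 2) ℝ | (X.trace) ^ 2 < 4 * X.det ∧ X 0 1 > 0},
          F (modularToReal γ * X * (modularToReal γ)⁻¹) = F X) ∧
      (∃ X ∈ {X : Matrix (Fin 2) (Fin 2) ℝ |
          ((X.trace) ^ 2 < 4 * X.det ∧ X 0 1 > 0) ∧ X.trace = 0 ∧ X.det = 1},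
        ∃ Y ∈ {X : Matrix (Fin 2) (Fin 2) ℝ |
          ((X.trace) ^ 2 < 4 * X.det ∧ X 0 1 > 0) ∧ X.trace = 0 ∧ X.det = 1},
          F X ≠ F Y) := by
  refine ⟨fun X => petDelta (fixPt X), ?_, ?_, ?_⟩
  · rintro X ⟨h, h0⟩
    exact AnalyticAt.fun_comp (petDelta_analyticAt (fixPt_im_pos h h0)) (fixPt_analyticAt h h0)
  · rintro γ X ⟨h, h0⟩
    simp only [fixPt_conj γ h h0]
    exact petDelta_smul γ _
  · have hmem : ∀ y : ℝ, 0 < y → (!![0, y; -y⁻¹, 0] : Matrix (Fin 2) (Fin 2) ℝ) ∈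
        {X : Matrix (Fin 2) (Fin 2) ℝ |
          ((X.trace) ^ 2 < 4 * X.det ∧ X 0 1 > 0) ∧ X.trace = 0 ∧ X.det = 1} := by
      intro y hy
      have hy' := hy.ne'
      simp [Matrix.trace_fin_two, Matrix.det_fin_two, hy, hy']
    have him : ∀ y : ℝ, 0 < y → (fixPt !![0, y; -y⁻¹, 0]).im = y := by
      intro y hy
      have h4 : √(4 : ℝ) = 2 := by
        rw [show (4 : ℝ) = 2 ^ 2 by norm_num]; exact Real.sqrt_sq (by norm_num)
      rw [fixPt_im, ((hmem y hy).2).1, ((hmem y hy).2).2]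
      norm_num [h4]
      field_simp
    let τ : ℝ → UpperHalfPlane := fun y =>
      if hy : 0 < y then ⟨fixPt !![0, y; -y⁻¹, 0], by rw [him y hy]; exact hy⟩
      else UpperHalfPlane.I
    have hτ : ∀ y : ℝ, 0 < y → ((τ y : UpperHalfPlane) : ℂ) = fixPt !![0, y; -y⁻¹, 0] := by
      intro y hy
      simp [τ, hy]
    have hlim : Filter.Tendsto τ Filter.atTop UpperHalfPlane.atImInfty := by
      rw [UpperHalfPlane.atImInfty, Filter.tendsto_comap_iff]
      refine Filter.Tendsto.congr' ?_ Filter.tendsto_id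
      filter_upwards [Filter.eventually_gt_atTop 0] with y hy
      rw [Function.comp_apply, ← UpperHalfPlane.coe_im, hτ y hy, him y hy]
      rfl
    have hpos := petDelta_pos (τ 1)
    have hev := (petDelta_tendsto.comp hlim).eventually (gt_mem_nhds hpos)
    obtain ⟨y, hy1, hy⟩ := (hev.and (Filter.eventually_gt_atTop 0)).exists
    refine ⟨_, hmem y hy, _, hmem 1 one_pos, ?_⟩
    simp only [Function.comp_apply] at hy1
    rw [hτ y hy, hτ 1 one_pos] at hy1
    exact hy1.ne
end

section
/- Let g ≥ 2 and let G be the group presented with generators a₁, …, a_g, b₁, …, b_g, γ and relations aᵢγaᵢ⁻¹γ⁻¹ = 1 and bᵢγbᵢ⁻¹γ⁻¹ = 1 for i = 1, …, g, together with γ^{2−2g}·((a₁b₁a₁⁻¹b₁⁻¹)⋯(a_gb_ga_g⁻¹b_g⁻¹))⁻¹ = 1. Then G is not almost commutative: G has no commutative subgroup of finite index, i.e. every subgroup H ≤ G of finite index is non-abelian. -/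
/-- Generator `aᵢ` of the fundamental group of the unit tangent bundle of a genus `g`
surface, as an element of the free group. -/
def genA (g : ℕ) (i : Fin g) : FreeGroup (Fin g ⊕ Fin g ⊕ Unit) :=
  FreeGroup.of (Sum.inl i)

/-- Generator `bᵢ`. -/
def genB (g : ℕ) (i : Fin g) : FreeGroup (Fin g ⊕ Fin g ⊕ Unit) :=
  FreeGroup.of (Sum.inr (Sum.inl i))

/-- The central generator `γ` (the class of the fibre). -/
def genC (g : ℕ) : FreeGroup (Fin g ⊕ Fin g ⊕ Unit) :=
  FreeGroup.of (Sum.inr (Sum.inr ()))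

/-- The relations `aᵢγaᵢ⁻¹γ⁻¹`, `bᵢγbᵢ⁻¹γ⁻¹` and
`γ^(2−2g)·((a₁b₁a₁⁻¹b₁⁻¹)⋯(a_g b_g a_g⁻¹ b_g⁻¹))⁻¹` of the fundamental group of the unit
tangent bundle of a closed orientable surface of genus `g`. -/
def unitTangentBundleRels (g : ℕ) : Set (FreeGroup (Fin g ⊕ Fin g ⊕ Unit)) :=
  (⋃ i : Fin g, {genA g i * genC g * (genA g i)⁻¹ * (genC g)⁻¹}) ∪
  (⋃ i : Fin g, {genB g i * genC g * (genB g i)⁻¹ * (genC g)⁻¹}) ∪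
  {genC g ^ ((2 : ℤ) - 2 * g) *
    (((List.finRange g).map
      (fun i => genA g i * genB g i * (genA g i)⁻¹ * (genB g i)⁻¹)).prod)⁻¹}

/-- Non-commutation of powers of two parabolic matrices. -/
theorem parabolic_pow_not_commute (n m : ℕ) (hn : 0 < n) (hm : 0 < m) :
    ModularGroup.T ^ n * (ModularGroup.S * ModularGroup.T * ModularGroup.S⁻¹) ^ m ≠
      (ModularGroup.S * ModularGroup.T * ModularGroup.S⁻¹) ^ m * ModularGroup.T ^ n := by
  intro h
  rw [conj_pow] at h
  have hT : ∀ k : ℕ, ((ModularGroup.T ^ k : Matrix.SpecialLinearGroup (Fin 2) ℤ) :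
      Matrix (Fin 2) (Fin 2) ℤ) = !![1, (k : ℤ); 0, 1] := by
    intro k
    have := ModularGroup.coe_T_zpow (k : ℤ)
    rwa [zpow_natCast] at this
  have h0 := congrArg (fun A : Matrix.SpecialLinearGroup (Fin 2) ℤ =>
    (A : Matrix (Fin 2) (Fin 2) ℤ) 0 0) h
  simp only [Matrix.SpecialLinearGroup.coe_mul, hT, Matrix.SpecialLinearGroup.coe_inv,
    ModularGroup.coe_S, Matrix.adjugate_fin_two_of] at h0
  simp [Matrix.mul_apply, Fin.sum_univ_two] at h0
  omega

/-- The map on generators to `SL(2, ℤ)`. -/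
def toSLGen (g : ℕ) : Fin g ⊕ Fin g ⊕ Unit → Matrix.SpecialLinearGroup (Fin 2) ℤ
  | Sum.inl i => if i.val = 0 then ModularGroup.T
      else ModularGroup.S * ModularGroup.T * ModularGroup.S⁻¹
  | Sum.inr _ => 1

theorem toSLGen_rels (g : ℕ) :
    ∀ r ∈ unitTangentBundleRels g, FreeGroup.lift (toSLGen g) r = 1 := by
  have hB : ∀ i, FreeGroup.lift (toSLGen g) (genB g i) = 1 := by
    intro i; simp [genB, toSLGen]
  have hC : FreeGroup.lift (toSLGen g) (genC g) = 1 := by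
    simp [genC, toSLGen]
  intro r hr
  simp only [unitTangentBundleRels, Set.mem_union, Set.mem_iUnion, Set.mem_singleton_iff] at hr
  rcases hr with (⟨i, rfl⟩ | ⟨i, rfl⟩) | rfl
  · simp [hC]
  · simp [hC, hB]
  · rw [map_mul, map_zpow, hC, one_zpow, one_mul, map_inv, inv_eq_one, map_list_prod]
    apply List.prod_eq_one
    intro x hx
    simp only [List.map_map, List.mem_map, Function.comp] at hx
    obtain ⟨i, -, rfl⟩ := hx
    simp [hB]

/-- The fundamental group of the unit tangent bundle of a closed orientable surface of
genus `g ≥ 2` is not almost commutative: every finite-index subgroup is non-abelian. -/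
theorem unit_tangent_bundle_surface_group_not_almost_commutative (g : ℕ) (hg : 2 ≤ g) :
    ∀ H : Subgroup (PresentedGroup (unitTangentBundleRels g)),
      H.index ≠ 0 → ∃ x ∈ H, ∃ y ∈ H, x * y ≠ y * x := by
  intro H hH
  let f := PresentedGroup.toGroup (toSLGen_rels g)
  let x : PresentedGroup (unitTangentBundleRels g) :=
    PresentedGroup.of (Sum.inl ⟨0, by omega⟩)
  let y : PresentedGroup (unitTangentBundleRels g) :=
    PresentedGroup.of (Sum.inl ⟨1, by omega⟩)
  have hx : f x = ModularGroup.T := by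
    simp [f, x, toSLGen]
  have hy : f y = ModularGroup.S * ModularGroup.T * ModularGroup.S⁻¹ := by
    simp [f, y, toSLGen]
  obtain ⟨n, hn, -, hxn⟩ := Subgroup.exists_pow_mem_of_index_ne_zero hH x
  obtain ⟨m, hm, -, hym⟩ := Subgroup.exists_pow_mem_of_index_ne_zero hH y
  refine ⟨x ^ n, hxn, y ^ m, hym, fun h => ?_⟩
  have h' := congrArg f h
  simp only [map_mul, map_pow, hx, hy] at h'
  exact parabolic_pow_not_commute n m hn hm h'
end
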